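/- (Confidentiality of the request in P1, req_notin_spies.) If evs ∈ p1, the event req A r n I B occurs in evs and A ∉ bad, then Nonce n ∉ analz (spies evs); i.e. the spy cannot obtain the session identifier n of an honest owner's agent. -/

import Mathlib

inductive agent : Type
  | Server : agent
  | Friend : ℕ → agent
  | Spy : agent
deriving DecidableEq

inductive msg : Type
  | Agent : agent → msg
  | Number : ℕ → msg
  | Nonce : ℕ → msg
  | Key : ℕ → msg
  | Hash : msg → msg
  | MPair : msg → msg → msg
  | Crypt : ℕ → msg → msg
deriving DecidableEq

inductive partsP (H : Set msg) : msg → Prop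
  | Inj : ∀ X, X ∈ H → partsP H X
  | Fst : ∀ X Y, partsP H (msg.MPair X Y) → partsP H X
  | Snd : ∀ X Y, partsP H (msg.MPair X Y) → partsP H Y
  | Body : ∀ K X, partsP H (msg.Crypt K X) → partsP H X

/-- `parts H`: sub-components of messages of `H`. -/
def parts (H : Set msg) : Set msg := {X | partsP H X}

inductive analzP (invKey : ℕ → ℕ) (H : Set msg) : msg → Prop
  | Inj : ∀ X, X ∈ H → analzP invKey H X
  | Fst : ∀ X Y, analzP invKey H (msg.MPair X Y) → analzP invKey H X
  | Snd : ∀ X Y, analzP invKey H (msg.MPair X Y) → analzP invKey H Y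
  | Decrypt : ∀ K X, analzP invKey H (msg.Crypt K X) →
      analzP invKey H (msg.Key (invKey K)) → analzP invKey H X

/-- `analz invKey H`: what can be obtained by decomposing and decrypting messages of `H`. -/
def analz (invKey : ℕ → ℕ) (H : Set msg) : Set msg := {X | analzP invKey H X}

inductive synthP (H : Set msg) : msg → Prop
  | Inj : ∀ X, X ∈ H → synthP H X
  | Ag : ∀ a, synthP H (msg.Agent a)
  | Num : ∀ n, synthP H (msg.Number n)
  | Hsh : ∀ X, synthP H X → synthP H (msg.Hash X)
  | Pr : ∀ X Y, synthP H X → synthP H Y → synthP H (msg.MPair X Y)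
  | Cry : ∀ K X, synthP H X → msg.Key K ∈ H → synthP H (msg.Crypt K X)

/-- `synth H`: messages that can be synthesized from `H`. -/
def synth (H : Set msg) : Set msg := {X | synthP H X}

inductive guardP (invKey : ℕ → ℕ) (n : ℕ) (Ks : Set ℕ) : msg → Prop
  | No_Nonce : ∀ X, msg.Nonce n ∉ parts {X} → guardP invKey n Ks X
  | Guard : ∀ K X, invKey K ∈ Ks → guardP invKey n Ks (msg.Crypt K X)
  | Cry : ∀ K X, guardP invKey n Ks X → guardP invKey n Ks (msg.Crypt K X)
  | Pr : ∀ X Y, guardP invKey n Ks X → guardP invKey n Ks Y →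
      guardP invKey n Ks (msg.MPair X Y)

/-- `guard n Ks`: messages in which `Nonce n` is guarded by the keys of `Ks`. -/
def guardMsg (invKey : ℕ → ℕ) (n : ℕ) (Ks : Set ℕ) : Set msg := {X | guardP invKey n Ks X}

/-- `Guard n Ks H`: every message of `H` lies in `guard n Ks`. -/
def Guard (invKey : ℕ → ℕ) (n : ℕ) (Ks : Set ℕ) (H : Set msg) : Prop :=
  ∀ X ∈ H, X ∈ guardMsg invKey n Ks
inductive event : Type
  | Says : agent → agent → msg → event
deriving DecidableEq

def msgOf : event → msg
  | event.Says _ _ X => X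

/-- Set of messages sent in a trace. -/
def sent (evs : List event) : Set msg :=
  {X | ∃ A B, event.Says A B X ∈ evs}
/-- Private key of an agent: the inverse of its public key. -/
def priK (invKey : ℕ → ℕ) (pubK : agent → ℕ) (A : agent) : ℕ := invKey (pubK A)

/-- Initial knowledge of each agent in a public-key infrastructure:
every agent knows its own private key and all public keys; the spy moreover
knows the private keys of the bad agents. -/
def initStatePK (invKey : ℕ → ℕ) (pubK : agent → ℕ) (bad : Set agent) : agent → Set msg :=
  fun A =>
    match A with
    | agent.Spy =>
        {X | ∃ B ∈ bad, X = msg.Key (priK invKey pubK B)} ∪ {X | ∃ B, X = msg.Key (pubK B)}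
    | _ => {msg.Key (priK invKey pubK A)} ∪ {X | ∃ B, X = msg.Key (pubK B)}

/-- `spies evs`: the private keys of the bad agents, all public keys, and
every message sent in `evs`. -/
def spiesPK (invKey : ℕ → ℕ) (pubK : agent → ℕ) (bad : Set agent) (evs : List event) :
    Set msg :=
  initStatePK invKey pubK bad agent.Spy ∪ sent evs

/-- `used evs`: parts of all agents' initial knowledge and of all messages sent in `evs`. -/
def usedPK (invKey : ℕ → ℕ) (pubK : agent → ℕ) (bad : Set agent) (evs : List event) :
    Set msg :=
  parts ((⋃ A, initStatePK invKey pubK bad A) ∪ sent evs)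
/-- The empty encoded list: a fixed atomic message. -/
def nilm : msg := msg.Number 0

/-- Cons on encoded lists. -/
def consm (X L : msg) : msg := msg.MPair X L

/-- Head of an encoded list. -/
def headm : msg → msg
  | msg.MPair X _ => X
  | _ => nilm

/-- Tail of an encoded list. -/
def tailm : msg → msg
  | msg.MPair _ L => L
  | _ => nilm

/-- Length of an encoded list. -/
def lenm : msg → ℕ
  | msg.MPair _ L => lenm L + 1
  | _ => 0

/-- `ith L i` is the `i+1`-th element of `L`. -/
def ith : msg → ℕ → msg
  | L, 0 => headm L
  | L, i + 1 => ith (tailm L) i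

/-- `repl L i M` is `L` with its `i+1`-th element replaced by `M`. -/
def repl : msg → ℕ → msg → msg
  | msg.MPair _ L, 0, M => msg.MPair M L
  | msg.MPair X L, i + 1, M => msg.MPair X (repl L i M)
  | L, _, _ => L

/-- `insm L i M` is `L` with `M` inserted before the `i+1`-th element of `L`. -/
def insm : msg → ℕ → msg → msg
  | L, 0, M => msg.MPair M L
  | msg.MPair X L, i + 1, M => msg.MPair X (insm L i M)
  | L, _, _ => L

/-- `trunc L i` truncates the `i` first elements of `L`. -/
def trunc : msg → ℕ → msg
  | L, 0 => L
  | msg.MPair _ L, i + 1 => trunc L i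
  | L, _ => L
/-- `sign B X = ⟨Agent B, X, Crypt (priK B) (Hash X)⟩`. -/
def sign (invKey : ℕ → ℕ) (pubK : agent → ℕ) (B : agent) (X : msg) : msg :=
  msg.MPair (msg.Agent B) (msg.MPair X (msg.Crypt (invKey (pubK B)) (msg.Hash X)))

/-- The chaining relation of protocol P1. -/
def chain (invKey : ℕ → ℕ) (pubK : agent → ℕ) (B : agent) (ofr : ℕ) (A : agent)
    (L : msg) (C : agent) : msg :=
  sign invKey pubK B (msg.MPair (msg.Crypt (pubK A) (msg.Nonce ofr))
    (msg.Hash (msg.MPair (headm L) (msg.Agent C))))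

/-- The start of the chaining relation. -/
def anchor (invKey : ℕ → ℕ) (pubK : agent → ℕ) (A : agent) (n : ℕ) (B : agent) : msg :=
  chain invKey pubK A n A (consm nilm nilm) B

/-- The signer of an offer `chain B ofr A L C`, i.e. `Agent B`. -/
def shop (M : msg) : msg := headm M

/-- The designated next server of an offer `chain B ofr A L C`, i.e. `C`. -/
def next_shop : msg → agent
  | msg.MPair _ (msg.MPair (msg.MPair _ (msg.Hash (msg.MPair _ (msg.Agent C)))) _) => C
  | _ => agent.Server
/-- Messages encoding lists of agent names. -/
inductive aglP : msg → Prop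
  | Nil : aglP nilm
  | Cons : ∀ a I, aglP I → aglP (consm (msg.Agent a) I)

def agl : Set msg := {I | aglP I}

/-- Append of encoded lists. -/
def appm : msg → msg → msg
  | msg.MPair X L, I => msg.MPair X (appm L I)
  | _, I => I

/-- `delm a I` removes the first occurrence of `a` from the encoded list `I`. -/
def delm (a : msg) : msg → msg
  | msg.MPair X L => if X = a then L else msg.MPair X (delm a L)
  | L => L

/-- `isin a I` means that `a` occurs in the encoded list `I`. -/
def isin (a : msg) : msg → Prop
  | msg.MPair X L => X = a ∨ isin a L
  | _ => False

/-- The request message of P1. -/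
def reqm (invKey : ℕ → ℕ) (pubK : agent → ℕ) (A : agent) (r n : ℕ) (I : msg) (B : agent) :
    msg :=
  msg.MPair (msg.Agent A) (msg.MPair (msg.Number r)
    (msg.MPair (consm (msg.Agent A) (consm (msg.Agent B) I))
      (consm (anchor invKey pubK A n B) nilm)))

/-- The proposition message of P1. -/
def prom (invKey : ℕ → ℕ) (pubK : agent → ℕ) (B : agent) (ofr : ℕ) (A : agent) (r : ℕ)
    (I L J : msg) (C : agent) : msg :=
  msg.MPair (msg.Agent A) (msg.MPair (msg.Number r)
    (msg.MPair (appm J (delm (msg.Agent B) I))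
      (consm (chain invKey pubK B ofr A L C) L)))

/-- The request event of P1. -/
def req (invKey : ℕ → ℕ) (pubK : agent → ℕ) (A : agent) (r n : ℕ) (I : msg) (B : agent) :
    event :=
  event.Says A B (reqm invKey pubK A r n I B)

/-- The proposition event of P1. -/
def pro (invKey : ℕ → ℕ) (pubK : agent → ℕ) (B : agent) (ofr : ℕ) (A : agent) (r : ℕ)
    (I L J : msg) (C : agent) : event :=
  event.Says B C (prom invKey pubK B ofr A r I L J C)

/-- The protocol P1. -/
inductive p1 (invKey : ℕ → ℕ) (pubK : agent → ℕ) (bad : Set agent) : List event → Prop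
  | Nil : p1 invKey pubK bad []
  | Fake : ∀ evs B X, p1 invKey pubK bad evs →
      X ∈ synth (analz invKey (spiesPK invKey pubK bad evs)) →
      p1 invKey pubK bad (event.Says agent.Spy B X :: evs)
  | Req : ∀ evs A B r n I, p1 invKey pubK bad evs →
      msg.Nonce n ∉ usedPK invKey pubK bad evs → I ∈ agl →
      p1 invKey pubK bad (req invKey pubK A r n I B :: evs)
  | Prop : ∀ evs A A' B C r ofr I L J, p1 invKey pubK bad evs →
      I ∈ agl → J ∈ agl →
      event.Says A' B (msg.MPair (msg.Agent A)
        (msg.MPair (msg.Number r) (msg.MPair I L))) ∈ evs →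
      isin (msg.Agent C) (appm J (delm (msg.Agent B) I)) →
      msg.Nonce ofr ∉ usedPK invKey pubK bad evs →
      p1 invKey pubK bad (pro invKey pubK B ofr A r I L J C :: evs)

/-!
Fix an owner `A` whose private key the spy does not hold initially. Call a message sealed when,
outside hashes, `Nonce n` and the private key of `A` occur in it only inside ciphertexts that this
very key opens.
Sealing the decryption key along with the nonce makes sealed messages closed under `analz`, and
they are closed under `synth` too, so the spy cannot leave them.

A request and a proposition have the same shape: a freshly generated nonce encrypted for the owner,
surrounded by material that the spy could have produced. Such a message is therefore sealed unless
it encrypts `n` for an owner other than `A`. Freshness excludes this as long as `n` is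
either unused or has already been issued for `A` by an agent other than the spy; induction on the
trace, backwards through these two situations, shows that everything the spy sees is sealed.
-/

section Sealed

/-- Messages in which `Nonce n` and the keys of `Ks` occur only under hashes or under encryptions
that are opened by a key of `Ks`. In contrast to `guardP`, the keys of `Ks` are guarded as well,
which makes the notion closed under `analz`. -/
def SealedP (invKey : ℕ → ℕ) (n : ℕ) (Ks : Set ℕ) : msg → Prop
  | msg.Agent _ => True
  | msg.Number _ => True
  | msg.Nonce m => m ≠ n
  | msg.Key K => K ∉ Ks
  | msg.Hash _ => True
  | msg.MPair X Y => SealedP invKey n Ks X ∧ SealedP invKey n Ks Y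
  | msg.Crypt K X => invKey K ∈ Ks ∨ SealedP invKey n Ks X

/-- The set of messages satisfying `SealedP`; the counterpart of `guardMsg`. -/
def sealedMsg (invKey : ℕ → ℕ) (n : ℕ) (Ks : Set ℕ) : Set msg := {X | SealedP invKey n Ks X}

variable {invKey : ℕ → ℕ} {n : ℕ} {Ks : Set ℕ} {H : Set msg}

theorem nonce_notMem_sealedMsg : msg.Nonce n ∉ sealedMsg invKey n Ks :=
  fun h => h rfl

theorem analz_subset_sealedMsg (hH : H ⊆ sealedMsg invKey n Ks) :
    analz invKey H ⊆ sealedMsg invKey n Ks := by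
  intro X hX
  induction hX with
  | Inj X hX => exact hH hX
  | Fst X Y _ ih => exact ih.1
  | Snd X Y _ ih => exact ih.2
  | Decrypt K X _ _ ihCrypt ihKey => exact ihCrypt.resolve_left ihKey

theorem synth_subset_sealedMsg (hH : H ⊆ sealedMsg invKey n Ks) :
    synth H ⊆ sealedMsg invKey n Ks := by
  intro X hX
  induction hX with
  | Inj X hX => exact hH hX
  | Ag | Num | Hsh => trivial
  | Pr X Y _ _ ihX ihY => exact ⟨ihX, ihY⟩
  | Cry K X _ _ ih => exact Or.inr ih

end Sealed

section AgentLists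

variable {I J : msg} {H : Set msg}

theorem agl_subset_synth : agl ⊆ synth H := by
  intro I hI
  induction hI with
  | Nil => exact synthP.Num 0
  | Cons a I _ ih => exact synthP.Pr _ _ (synthP.Ag a) ih

theorem appm_mem_agl (hJ : J ∈ agl) (hI : I ∈ agl) : appm J I ∈ agl := by
  induction hJ with
  | Nil => exact hI
  | Cons a J _ ih => exact aglP.Cons a _ ih

theorem delm_mem_agl (X : msg) (hI : I ∈ agl) : delm X I ∈ agl := by
  induction hI with
  | Nil => exact aglP.Nil
  | Cons a I hI ih =>
    rw [consm, delm]
    split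
    · exact hI
    · exact aglP.Cons a _ ih

end AgentLists

section Traces

variable {invKey : ℕ → ℕ} {pubK : agent → ℕ} {bad : Set agent} {evs : List event}
  {A B : agent} {X : msg}

theorem parts_mono {G H : Set msg} (hGH : G ⊆ H) : parts G ⊆ parts H := by
  intro X hX
  induction hX with
  | Inj X hX => exact partsP.Inj X (hGH hX)
  | Fst X Y _ ih => exact partsP.Fst X Y ih
  | Snd X Y _ ih => exact partsP.Snd X Y ih
  | Body K X _ ih => exact partsP.Body K X ih

theorem sent_cons : sent (event.Says A B X :: evs) = insert X (sent evs) := by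
  ext Y
  simp only [sent, Set.mem_ofPred_eq, List.mem_cons, Set.mem_insert_iff, event.Says.injEq]
  grind

theorem spiesPK_cons :
    spiesPK invKey pubK bad (event.Says A B X :: evs) =
      insert X (spiesPK invKey pubK bad evs) := by
  rw [spiesPK, sent_cons, Set.union_insert, spiesPK]

theorem usedPK_subset_cons :
    usedPK invKey pubK bad evs ⊆ usedPK invKey pubK bad (event.Says A B X :: evs) := by
  rw [usedPK, usedPK, sent_cons]
  exact parts_mono (Set.union_subset_union_right _ (Set.subset_insert _ _))

theorem initStatePK_spy_subset_sealedMsg {n : ℕ} {Ks : Set ℕ}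
    (hKs : ∀ K ∈ Ks, msg.Key K ∉ initStatePK invKey pubK bad agent.Spy) :
    initStatePK invKey pubK bad agent.Spy ⊆ sealedMsg invKey n Ks := by
  intro X hX
  have hKey : ∃ K, X = msg.Key K := by
    rcases hX with ⟨B, _, rfl⟩ | ⟨B, rfl⟩ <;> exact ⟨_, rfl⟩
  obtain ⟨K, rfl⟩ := hKey
  exact fun hK => hKs K hK hX

theorem key_priK_notMem_initStatePK_spy (hpri : Function.Injective (priK invKey pubK))
    (hpubpri : ∀ A B : agent, pubK A ≠ priK invKey pubK B) (hA : A ∉ bad) :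
    msg.Key (priK invKey pubK A) ∉ initStatePK invKey pubK bad agent.Spy := by
  rintro (⟨B, hB, hAB⟩ | ⟨B, hAB⟩)
  · exact hA (hpri (msg.Key.inj hAB) ▸ hB)
  · exact hpubpri B A (msg.Key.inj hAB).symm

end Traces

section Offers

/-- The common shape of requests and propositions: `B` issues the nonce `n`, encrypted for the owner
`A`, in a chaining link whose predecessor list is `L`; `L'` is the list of offers to which the link
is prepended. The two lists are separate because a request links to `⟨nil, nil⟩` but is prepended
to `nil`. -/
def offerMsg (invKey : ℕ → ℕ) (pubK : agent → ℕ) (B : agent) (n : ℕ) (A : agent) (r : ℕ)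
    (I L L' : msg) (C : agent) : msg :=
  msg.MPair (msg.Agent A) (msg.MPair (msg.Number r)
    (msg.MPair I (consm (chain invKey pubK B n A L C) L')))

variable {invKey : ℕ → ℕ} {pubK : agent → ℕ} {bad : Set agent} {evs : List event}
  {A A' B B' C C' D D' : agent} {r r' n n' : ℕ} {I I₁ L L₁ L' L₁' : msg}

theorem reqm_eq_offerMsg :
    reqm invKey pubK A r n I B =
      offerMsg invKey pubK A n A r (consm (msg.Agent A) (consm (msg.Agent B) I))
        (consm nilm nilm) nilm B :=
  rfl

theorem prom_eq_offerMsg {J : msg} :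
    prom invKey pubK B n A r I L J C =
      offerMsg invKey pubK B n A r (appm J (delm (msg.Agent B) I)) L L C :=
  rfl

theorem offerMsg_inj
    (h : offerMsg invKey pubK B n A r I L L' C = offerMsg invKey pubK B' n' A' r' I₁ L₁ L₁' C') :
    n = n' ∧ A = A' := by
  simp only [offerMsg, chain, sign, consm, msg.MPair.injEq, msg.Agent.injEq, msg.Crypt.injEq,
    msg.Nonce.injEq] at h
  tauto

theorem nonce_mem_parts_offerMsg {H : Set msg}
    (h : offerMsg invKey pubK B n A r I L L' C ∈ H) : msg.Nonce n ∈ parts H := by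
  have hlist := partsP.Snd _ _ (partsP.Snd _ _ (partsP.Snd _ _ (partsP.Inj _ h)))
  have hchain : partsP H (chain invKey pubK B n A L C) := partsP.Fst _ _ hlist
  have hcrypt : partsP H (msg.Crypt (pubK A) (msg.Nonce n)) :=
    partsP.Fst _ _ (partsP.Fst _ _ (partsP.Snd _ _ hchain))
  exact partsP.Body _ _ hcrypt

theorem nonce_mem_usedPK_of_says_offerMsg
    (h : event.Says B C (offerMsg invKey pubK B' n A r I L L' D) ∈ evs) :
    msg.Nonce n ∈ usedPK invKey pubK bad evs :=
  nonce_mem_parts_offerMsg (Or.inr ⟨B, C, h⟩)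

theorem offerMsg_mem_sealedMsg {Ks : Set ℕ} (hI : I ∈ sealedMsg invKey n Ks)
    (hL' : L' ∈ sealedMsg invKey n Ks) (hn : priK invKey pubK A ∈ Ks ∨ n' ≠ n) :
    offerMsg invKey pubK B n' A r I L L' C ∈ sealedMsg invKey n Ks :=
  ⟨trivial, trivial, hI, ⟨trivial, ⟨hn, trivial⟩, Or.inr trivial⟩, hL'⟩

/-- Apart from the chaining link, a request or proposition contains nothing the spy could not
produce, so the two honest rules of `p1` collapse into one. -/
@[elab_as_elim]
theorem p1.induction_offer {motive : List event → Prop} (hevs : p1 invKey pubK bad evs)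
    (nil : motive [])
    (fake : ∀ evs B X, X ∈ synth (analz invKey (spiesPK invKey pubK bad evs)) →
      motive evs → motive (event.Says agent.Spy B X :: evs))
    (offer : ∀ evs A B C r n I L L', msg.Nonce n ∉ usedPK invKey pubK bad evs →
      I ∈ synth (analz invKey (spiesPK invKey pubK bad evs)) →
      L' ∈ synth (analz invKey (spiesPK invKey pubK bad evs)) →
      motive evs → motive (event.Says B C (offerMsg invKey pubK B n A r I L L' C) :: evs)) :
    motive evs := by
  induction hevs with
  | Nil => exact nil
  | Fake evs B X _ hX ih => exact fake evs B X hX ih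
  | Req evs A B r n I _ hn hI ih =>
    rw [req, reqm_eq_offerMsg]
    exact offer _ _ _ _ _ _ _ _ _ hn
      (agl_subset_synth (aglP.Cons A _ (aglP.Cons B _ hI))) (synthP.Num 0) ih
  | _ evs A A' B C r n I L J _ hI hJ hsays _ hn ih =>
    rw [pro, prom_eq_offerMsg]
    have hL : L ∈ analz invKey (spiesPK invKey pubK bad evs) :=
      analzP.Snd _ _ (analzP.Snd _ _ (analzP.Snd _ _ (analzP.Inj _ (Or.inr ⟨A', B, hsays⟩))))
    exact offer _ _ _ _ _ _ _ _ _ hn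
      (agl_subset_synth (appm_mem_agl hJ (delm_mem_agl _ hI))) (synthP.Inj _ hL) ih

/-- The nonce `n` is not yet in use, or some agent other than the spy has issued it for the owner
`A`. In both cases no honest step can encrypt `n` for another owner. -/
inductive ReservedFor (invKey : ℕ → ℕ) (pubK : agent → ℕ) (bad : Set agent) (n : ℕ) (A : agent)
    (evs : List event) : Prop
  | unused (hn : msg.Nonce n ∉ usedPK invKey pubK bad evs) : ReservedFor invKey pubK bad n A evs
  | offered {B C D : agent} {r : ℕ} {I L L' : msg} (hB : B ≠ agent.Spy)
      (hoffer : event.Says B C (offerMsg invKey pubK B n A r I L L' D) ∈ evs) :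
      ReservedFor invKey pubK bad n A evs

theorem ReservedFor.of_cons_spy {X : msg}
    (h : ReservedFor invKey pubK bad n A (event.Says agent.Spy B X :: evs)) :
    ReservedFor invKey pubK bad n A evs := by
  cases h with
  | unused hn => exact .unused (fun hused => hn (usedPK_subset_cons hused))
  | offered hB hoffer =>
    rcases List.mem_cons.1 hoffer with heq | hmem
    · exact absurd (event.Says.inj heq).1 hB
    · exact .offered hB hmem

theorem ReservedFor.of_cons_offer (hn' : msg.Nonce n' ∉ usedPK invKey pubK bad evs)
    (h : ReservedFor invKey pubK bad n A
      (event.Says B C (offerMsg invKey pubK B' n' A' r I L L' D) :: evs)) :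
    ReservedFor invKey pubK bad n A evs ∧ (A' = A ∨ n' ≠ n) := by
  cases h with
  | unused hn =>
    refine ⟨.unused (fun hused => hn (usedPK_subset_cons hused)), Or.inr ?_⟩
    rintro rfl
    exact hn (nonce_mem_usedPK_of_says_offerMsg List.mem_cons_self)
  | offered hB hoffer =>
    rcases List.mem_cons.1 hoffer with heq | hmem
    · obtain ⟨rfl, rfl⟩ := offerMsg_inj (event.Says.inj heq).2.2
      exact ⟨.unused hn', Or.inl rfl⟩
    · refine ⟨.offered hB hmem, Or.inr ?_⟩
      rintro rfl
      exact hn' (nonce_mem_usedPK_of_says_offerMsg hmem)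

theorem spiesPK_subset_sealedMsg (hevs : p1 invKey pubK bad evs)
    (hA : msg.Key (priK invKey pubK A) ∉ initStatePK invKey pubK bad agent.Spy)
    (hn : ReservedFor invKey pubK bad n A evs) :
    spiesPK invKey pubK bad evs ⊆ sealedMsg invKey n {priK invKey pubK A} := by
  revert hn
  refine hevs.induction_offer ?nil ?fake ?offer
  case nil =>
    intro _
    have hsent : sent [] = ∅ := by simp [sent]
    rw [spiesPK, hsent, Set.union_empty]
    exact initStatePK_spy_subset_sealedMsg (by rintro K rfl; exact hA)
  case fake =>
    intro evs B X hX ih hn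
    have hspies := ih hn.of_cons_spy
    rw [spiesPK_cons]
    exact Set.insert_subset (synth_subset_sealedMsg (analz_subset_sealedMsg hspies) hX) hspies
  case offer =>
    intro evs A' B C r n' I L L' hn' hI hL' ih hn
    obtain ⟨hn, hA'⟩ := hn.of_cons_offer hn'
    have hspies := ih hn
    have hsynth := synth_subset_sealedMsg (analz_subset_sealedMsg hspies)
    rw [spiesPK_cons]
    refine Set.insert_subset (offerMsg_mem_sealedMsg (hsynth hI) (hsynth hL') ?_) hspies
    exact hA'.imp_left (congrArg (priK invKey pubK))

theorem req_notin_spies_general (hevs : p1 invKey pubK bad evs)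
    (hA : msg.Key (priK invKey pubK A) ∉ initStatePK invKey pubK bad agent.Spy)
    (hB : B ≠ agent.Spy)
    (hoffer : event.Says B C (offerMsg invKey pubK B n A r I L L' D) ∈ evs) :
    msg.Nonce n ∉ analz invKey (spiesPK invKey pubK bad evs) :=
  fun hn => nonce_notMem_sealedMsg
    (analz_subset_sealedMsg (spiesPK_subset_sealedMsg hevs hA (.offered hB hoffer)) hn)

end Offers

/-- Confidentiality of the request in P1 (`req_notin_spies`): the spy cannot
obtain the session identifier `n` of an honest owner's agent. -/
theorem req_notin_spies
    (invKey : ℕ → ℕ) (pubK : agent → ℕ) (bad : Set agent)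
    (hinv : ∀ K, invKey (invKey K) = K)
    (hpub : Function.Injective pubK)
    (hpri : Function.Injective (priK invKey pubK))
    (hpubpri : ∀ A B : agent, pubK A ≠ priK invKey pubK B)
    (hspy : agent.Spy ∈ bad)
    (evs : List event) (A B : agent) (r n : ℕ) (I : msg)
    (hevs : p1 invKey pubK bad evs)
    (hreq : req invKey pubK A r n I B ∈ evs)
    (hA : A ∉ bad) :
    msg.Nonce n ∉ analz invKey (spiesPK invKey pubK bad evs) := by
  have hkey := key_priK_notMem_initStatePK_spy hpri hpubpri hA
  exact req_notin_spies_general hevs hkey (ne_of_mem_of_not_mem hspy hA).symm hreq
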